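/- arXiv:1412.7890 — 3 statements merged into one kernel-verified Lean document; each statement's English description precedes it below -/
import Mathlib

section
/- Let ψ(t) := (1+t)log(1+t) − t. For every δ ∈ (0,1), both ψ(δ) ≥ (log 4 − 1) δ² and ψ(−δ) ≥ (log 4 − 1) δ² hold; equivalently, (1+t)log(1+t) − t ≥ (log 4 − 1) t² for all t ∈ (−1,1). -/
noncomputable section
namespace RMI

/-- `ψ(t) = (1+t) log(1+t) − t`. -/
def psi (t : ℝ) : ℝ := (1 + t) * Real.log (1 + t) - t

lemma aux_log4 : Real.log 4 = 2 * Real.log 2 := by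
  rw [show (4 : ℝ) = 2 ^ 2 by norm_num, Real.log_pow]; norm_num

lemma aux_deriv (c x : ℝ) (hx : -1 < x) :
    HasDerivAt (fun t : ℝ => (1 + t) * Real.log (1 + t) - t - c * t ^ 2)
      (Real.log (1 + x) - 2 * c * x) x := by
  have hne : (1 + x) ≠ 0 := by linarith
  have h1 : HasDerivAt (fun t : ℝ => 1 + t) 1 x := (hasDerivAt_id x).const_add 1
  have h2 := ((h1.mul (h1.log hne)).sub (hasDerivAt_id x)).sub
    (((hasDerivAt_id x).pow 2).const_mul c)
  refine h2.congr_deriv ?_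
  simp only [id]
  field_simp
  push_cast
  ring

lemma aux_mvt (c x y : ℝ) (hx : -1 < x) (hxy : x < y) :
    ∃ a ∈ Set.Ioo x y, (Real.log (1 + a) - 2 * c * a) * (y - x) =
      ((1 + y) * Real.log (1 + y) - y - c * y ^ 2)
        - ((1 + x) * Real.log (1 + x) - x - c * x ^ 2) := by
  obtain ⟨a, ha, h⟩ := exists_hasDerivAt_eq_slope
    (fun t : ℝ => (1 + t) * Real.log (1 + t) - t - c * t ^ 2)
    (fun x => Real.log (1 + x) - 2 * c * x) hxy
    (fun z hz => (aux_deriv c z (by linarith [hz.1])).continuousAt.continuousWithinAt)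
    (fun z hz => aux_deriv c z (by linarith [hz.1]))
  refine ⟨a, ha, ?_⟩
  have : y - x ≠ 0 := by linarith
  rw [h]
  field_simp

lemma aux_main (t : ℝ) (ht : t ∈ Set.Ioo (-1 : ℝ) 1) :
    (Real.log 4 - 1) * t ^ 2 ≤ (1 + t) * Real.log (1 + t) - t := by
  obtain ⟨h1, h2⟩ := ht
  have hl := aux_log4
  have hl2 := Real.log_two_lt_d9
  by_contra! hlt
  rcases lt_trichotomy t 0 with h | h | h
  · obtain ⟨a, ⟨ha1, ha2⟩, ha⟩ := aux_mvt (Real.log 4 - 1) t 0 h1 h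
    simp at ha
    have hlog := Real.log_le_sub_one_of_pos (show 0 < 1 + a by linarith)
    have : Real.log (1 + a) - 2 * (Real.log 4 - 1) * a ≤ 0 := by nlinarith
    nlinarith
  · subst h; simp at hlt
  · obtain ⟨a, ⟨ha1, ha2⟩, ha⟩ := aux_mvt (Real.log 4 - 1) 0 t (by norm_num) h
    obtain ⟨b, ⟨hb1, hb2⟩, hb⟩ := aux_mvt (Real.log 4 - 1) t 1 h1 h2
    have e : (1 + 1 : ℝ) = 2 := by norm_num
    simp only [e] at hb
    simp at ha
    have hb' : 0 < Real.log (1 + b) - 2 * (Real.log 4 - 1) * b := by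
      by_contra! hc
      nlinarith
    have ha' : Real.log (1 + a) - 2 * (Real.log 4 - 1) * a < 0 := by
      by_contra! hc
      nlinarith
    have hb0 : 0 < b := by linarith
    have hc := strictConcaveOn_log_Ioi.concaveOn.2 (show (1 : ℝ) ∈ Set.Ioi 0 by simp)
      (show 1 + b ∈ Set.Ioi 0 from (by linarith : (0 : ℝ) < 1 + b))
      (show 0 ≤ 1 - a / b by rw [sub_nonneg, div_le_one hb0]; linarith) (show 0 ≤ a / b by positivity) (by ring)
    have e2 : (1 - a / b) • (1 : ℝ) + (a / b) • (1 + b) = 1 + a := by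
      simp only [smul_eq_mul]; field_simp; ring
    rw [e2] at hc
    simp only [smul_eq_mul, Real.log_one, mul_zero, zero_add] at hc
    have hp := mul_pos (div_pos ha1 hb0) hb'
    have e3 : a / b * (Real.log (1 + b) - 2 * (Real.log 4 - 1) * b)
      = a / b * Real.log (1 + b) - 2 * (Real.log 4 - 1) * a := by field_simp
    linarith

/-- For every `δ ∈ (0,1)`, both `ψ(δ) ≥ (log 4 − 1) δ²` and `ψ(−δ) ≥ (log 4 − 1) δ²`;
equivalently, `(1+t) log(1+t) − t ≥ (log 4 − 1) t²` for all `t ∈ (−1,1)`. -/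
theorem stmt_9 :
    (∀ δ : ℝ, δ ∈ Set.Ioo (0 : ℝ) 1 →
        (Real.log 4 - 1) * δ ^ 2 ≤ psi δ ∧ (Real.log 4 - 1) * δ ^ 2 ≤ psi (-δ)) ∧
    (∀ t : ℝ, t ∈ Set.Ioo (-1 : ℝ) 1 →
        (Real.log 4 - 1) * t ^ 2 ≤ (1 + t) * Real.log (1 + t) - t) := by
  refine ⟨fun δ hδ => ⟨aux_main δ ⟨by linarith [hδ.1], hδ.2⟩, ?_⟩, aux_main⟩
  have h := aux_main (-δ) ⟨by linarith [hδ.2], by linarith [hδ.1]⟩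
  rw [neg_sq] at h
  exact h
end RMI
end
end

section
/- For every α > 0, the integral ∫₀^α √(log(1 + 1/u)) du is finite and satisfies ∫₀^α √(log(1 + 1/u)) du ≤ 2α √(log(1 + 1/α)). -/
open MeasureTheory
noncomputable section
namespace RMI

lemma log_bound (α u : ℝ) (hu : 0 < u) (hua : u ≤ α) :
    Real.log (1 + 1 / u) ≤ α * Real.log (1 + 1 / α) * u⁻¹ := by
  have hα : 0 < α := hu.trans_le hua
  have h1 : (0:ℝ) < 1 / u := by positivity
  have h := rpow_one_add_le_one_add_mul_self (s := 1 / u) (p := u / α)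
    (by linarith) (by positivity) ((div_le_one hα).2 hua)
  have e : u / α * (1 / u) = 1 / α := by field_simp
  rw [e] at h
  have h2 := Real.log_le_log (by positivity) h
  rw [Real.log_rpow (by positivity)] at h2
  rw [← div_eq_mul_inv, le_div_iff₀ hu]
  have h3 := mul_le_mul_of_nonneg_left h2 hα.le
  have e2 : α * (u / α * Real.log (1 + 1 / u)) = Real.log (1 + 1 / u) * u := by
    field_simp
  rwa [e2] at h3

lemma sqrt_bound (α u : ℝ) (hu : 0 < u) (hua : u ≤ α) :
    Real.sqrt (Real.log (1 + 1 / u)) ≤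
      Real.sqrt (α * Real.log (1 + 1 / α)) * u ^ (-(1 / 2) : ℝ) := by
  refine (Real.sqrt_le_sqrt (log_bound α u hu hua)).trans (le_of_eq ?_)
  rw [Real.sqrt_mul' _ (by positivity), Real.sqrt_inv, Real.rpow_neg hu.le, Real.sqrt_eq_rpow u]

/-- For every `α > 0`, `∫₀^α √(log(1 + 1/u)) du` is finite and is at most
`2α √(log(1 + 1/α))`. -/
theorem stmt_10 (α : ℝ) (hα : 0 < α) :
    IntegrableOn (fun u : ℝ => Real.sqrt (Real.log (1 + 1 / u))) (Set.Ioc 0 α) ∧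
    ∫ u in Set.Ioc (0 : ℝ) α, Real.sqrt (Real.log (1 + 1 / u)) ≤
      2 * α * Real.sqrt (Real.log (1 + 1 / α)) := by
  have hg : IntegrableOn (fun u : ℝ => Real.sqrt (α * Real.log (1 + 1 / α)) *
      u ^ (-(1 / 2) : ℝ)) (Set.Ioc 0 α) := by
    have := (intervalIntegral.intervalIntegrable_rpow' (a := 0) (b := α)
      (r := (-(1 / 2) : ℝ)) (by norm_num)).const_mul (Real.sqrt (α * Real.log (1 + 1 / α)))
    exact (intervalIntegrable_iff_integrableOn_Ioc_of_le hα.le).1 this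
  have hf : IntegrableOn (fun u : ℝ => Real.sqrt (Real.log (1 + 1 / u))) (Set.Ioc 0 α) := by
    refine Integrable.mono' hg (Measurable.aestronglyMeasurable (by fun_prop)) ?_
    refine (ae_restrict_iff' measurableSet_Ioc).2 (Filter.Eventually.of_forall fun u hu => ?_)
    rw [Real.norm_of_nonneg (Real.sqrt_nonneg _)]
    exact sqrt_bound α u hu.1 hu.2
  refine ⟨hf, ?_⟩
  refine (setIntegral_mono_on hf hg measurableSet_Ioc
    fun u hu => sqrt_bound α u hu.1 hu.2).trans (le_of_eq ?_)
  rw [← intervalIntegral.integral_of_le hα.le, intervalIntegral.integral_const_mul,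
    integral_rpow (Or.inl (by norm_num)), Real.sqrt_mul hα.le]
  have e : (-(1 / 2) + 1 : ℝ) = 1 / 2 := by norm_num
  rw [e, Real.zero_rpow (by norm_num), ← Real.sqrt_eq_rpow]
  have := Real.mul_self_sqrt hα.le
  linear_combination (2 * Real.sqrt (Real.log (1 + 1 / α))) * this
end RMI
end
end

section
/- There exists an absolute constant c > 0 with the following property: for all integers 1 ≤ S ≤ L with L ≥ 2, and all reals θ > 0 and 0 < ρ ≤ θ√L, one has ∫₀^θ √( S log(Le/S) + S log(1 + 2ρ/u) ) du ≤ c θ √(S log L). -/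
open MeasureTheory
noncomputable section
namespace RMI

theorem stmt_15 :
    ∃ c : ℝ, 0 < c ∧
      ∀ (S L : ℕ), 1 ≤ S → S ≤ L → 2 ≤ L →
        ∀ θ ρ : ℝ, 0 < θ → 0 < ρ → ρ ≤ θ * Real.sqrt L →
          ∫ u in Set.Ioc (0 : ℝ) θ,
              Real.sqrt ((S : ℝ) * Real.log ((L : ℝ) * Real.exp 1 / S) +
                (S : ℝ) * Real.log (1 + 2 * ρ / u)) ≤
            c * θ * Real.sqrt ((S : ℝ) * Real.log L) := by
  refine ⟨6, by norm_num, ?_⟩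
  intro S L hS hSL hL θ ρ hθ hρ hρL
  have hS' : (1 : ℝ) ≤ S := by exact_mod_cast hS
  have hL' : (2 : ℝ) ≤ L := by exact_mod_cast hL
  have hLpos : (0 : ℝ) < L := by linarith
  have hsL : 1 ≤ Real.sqrt L := Real.one_le_sqrt.2 (by linarith)
  have hlogL : (0.69 : ℝ) ≤ Real.log L := by
    have h1 := Real.log_two_gt_d9
    have h2 := Real.log_le_log (by norm_num : (0 : ℝ) < 2) hL'
    linarith
  have hlog3 : Real.log 3 ≤ 2 := by
    have := Real.log_le_sub_one_of_pos (by norm_num : (0 : ℝ) < 3)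
    linarith
  have hfirst : Real.log ((L : ℝ) * Real.exp 1 / S) ≤ Real.log L + 1 := by
    have : Real.log ((L : ℝ) * Real.exp 1 / S) ≤ Real.log (L * Real.exp 1) := by
      apply Real.log_le_log (by positivity)
      exact div_le_self (by positivity) hS'
    rwa [Real.log_mul hLpos.ne' (Real.exp_pos 1).ne', Real.log_exp] at this
  set A := Real.sqrt ((S : ℝ) * Real.log L) with hA
  have hint : IntervalIntegrable (fun u : ℝ => u ^ (-(1 / 2) : ℝ)) volume 0 θ :=
    intervalIntegral.intervalIntegrable_rpow' (by norm_num)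
  have key : ∀ u ∈ Set.Ioc (0 : ℝ) θ,
      Real.sqrt ((S : ℝ) * Real.log ((L : ℝ) * Real.exp 1 / S) +
                (S : ℝ) * Real.log (1 + 2 * ρ / u)) ≤
        (3 * A * Real.sqrt θ) * u ^ (-(1 / 2) : ℝ) := by
    rintro u ⟨hu, huθ⟩
    have ht : 1 ≤ θ / u := (one_le_div hu).2 huθ
    have htpos : 0 < θ / u := by positivity
    have h1 : 1 + 2 * ρ / u ≤ 3 * Real.sqrt L * (θ / u) := by
      have e1 : 2 * ρ / u ≤ 2 * (θ * Real.sqrt L) / u := by gcongr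
      have e2 : 2 * (θ * Real.sqrt L) / u = 2 * Real.sqrt L * (θ / u) := by ring
      nlinarith [mul_le_mul hsL ht zero_le_one (by positivity)]
    have h2 : Real.log (1 + 2 * ρ / u) ≤ Real.log 3 + Real.log L / 2 + Real.log (θ / u) := by
      have := Real.log_le_log (by positivity) h1
      rwa [Real.log_mul (by positivity) htpos.ne', Real.log_mul (by norm_num) (by positivity),
        Real.log_sqrt hLpos.le] at this
    have h3 := Real.log_le_sub_one_of_pos htpos
    have h4 : Real.log ((L : ℝ) * Real.exp 1 / S) + Real.log (1 + 2 * ρ / u) ≤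
        9 * Real.log L * (θ / u) := by
      nlinarith [mul_nonneg (sub_nonneg.2 hlogL) (sub_nonneg.2 ht)]
    have h5 : (S : ℝ) * Real.log ((L : ℝ) * Real.exp 1 / S) + S * Real.log (1 + 2 * ρ / u) ≤
        3 ^ 2 * (S * Real.log L) * (θ / u) := by
      have := mul_le_mul_of_nonneg_left h4 (by linarith : (0 : ℝ) ≤ S)
      linarith
    have hSl : 0 ≤ (S : ℝ) * Real.log L := by
      apply mul_nonneg <;> linarith
    refine (Real.sqrt_le_sqrt h5).trans (le_of_eq ?_)
    rw [Real.sqrt_mul (by positivity), Real.sqrt_mul (by positivity),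
      Real.sqrt_sq (by norm_num), Real.sqrt_div hθ.le, Real.rpow_neg hu.le,
      ← Real.sqrt_eq_rpow]
    ring
  have hcmp : ∫ u in Set.Ioc (0 : ℝ) θ,
              Real.sqrt ((S : ℝ) * Real.log ((L : ℝ) * Real.exp 1 / S) +
                (S : ℝ) * Real.log (1 + 2 * ρ / u)) ≤
      ∫ u in Set.Ioc (0 : ℝ) θ, (3 * A * Real.sqrt θ) * u ^ (-(1 / 2) : ℝ) := by
    apply integral_mono_of_nonneg
    · exact Filter.Eventually.of_forall fun u => Real.sqrt_nonneg _
    · exact ((intervalIntegrable_iff_integrableOn_Ioc_of_le hθ.le).1 hint).const_mul _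
    · exact (ae_restrict_iff' measurableSet_Ioc).2 (Filter.Eventually.of_forall key)
  refine hcmp.trans (le_of_eq ?_)
  rw [integral_const_mul, ← intervalIntegral.integral_of_le hθ.le,
    integral_rpow (Or.inl (by norm_num))]
  have e : (-(1 / 2) + 1 : ℝ) = 1 / 2 := by norm_num
  rw [e, Real.zero_rpow (by norm_num), ← Real.sqrt_eq_rpow]
  have := Real.mul_self_sqrt hθ.le
  linear_combination 6 * A * this
end RMI
end
end
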